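/- For every involution θ in the Weyl group W(Bₙ) (acting on ℝⁿ as a signed permutation), the number |{α ∈ Δ⁺ : θα ∉ Δ⁺}| + dim ker(θ + id) is even. Consequently the length ℓ(θ) := (1/2)|{α ∈ Δ⁺ : θα ∉ Δ⁺}| + (1/2) dim ker(θ + id) is a nonnegative integer. -/

import Mathlib

open scoped RealInnerProductSpace

noncomputable section

/-- Euclidean space `ℝⁿ`. -/
abbrev EucB (n : ℕ) := EuclideanSpace ℝ (Fin n)

/-- The `i`-th standard basis vector of `ℝⁿ`. -/
def eB (n : ℕ) (i : Fin n) : EucB n := EuclideanSpace.single i (1 : ℝ)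

/-- The root system `Δ` of type `Bₙ`:
`{±eᵢ ± eⱼ : i < j} ∪ {±eᵢ}`. -/
def DeltaB (n : ℕ) : Set (EucB n) :=
  {v | (∃ i j : Fin n, i < j ∧
          (v = eB n i + eB n j ∨ v = eB n i - eB n j ∨
           v = -eB n i + eB n j ∨ v = -eB n i - eB n j)) ∨
        ∃ i : Fin n, v = eB n i ∨ v = -eB n i}

/-- The positive system `Δ⁺ = {eᵢ ± eⱼ : i < j} ∪ {eᵢ}`. -/
def DeltaBpos (n : ℕ) : Set (EucB n) :=
  {v | (∃ i j : Fin n, i < j ∧ (v = eB n i + eB n j ∨ v = eB n i - eB n j)) ∨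
        ∃ i : Fin n, v = eB n i}

/-- The coroot `α∨ = 2α/⟪α,α⟫`. -/
def corootB (n : ℕ) (α : EucB n) : EucB n := (2 / ⟪α, α⟫) • α

/-- The linear functional `x ↦ ⟪x, α∨⟫`. -/
def corootForm (n : ℕ) (α : EucB n) : Module.Dual ℝ (EucB n) where
  toFun x := ⟪x, corootB n α⟫
  map_add' x y := inner_add_left _ _ _
  map_smul' c x := by simpa using real_inner_smul_left x (corootB n α) c

/-- The reflection `s_α(x) = x − ⟪x, α∨⟫ α` as a linear automorphism of `ℝⁿ`
(for `α` a root, the branch condition `⟪α, α∨⟫ = 2` holds). -/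
def sReflB (n : ℕ) (α : EucB n) : EucB n ≃ₗ[ℝ] EucB n :=
  if h : corootForm n α α = 2 then Module.reflection h else LinearEquiv.refl ℝ (EucB n)

/-- The Weyl group `W(Bₙ)`, the subgroup of linear automorphisms of `ℝⁿ` generated by the
reflections in the roots of `Δ`. -/
def WeylB (n : ℕ) : Subgroup (EucB n ≃ₗ[ℝ] EucB n) :=
  Subgroup.closure {g | ∃ α ∈ DeltaB n, g = sReflB n α}

/-!
Every `w ∈ W(Bₙ)` satisfies `(-1) ^ |{α ∈ Δ⁺ : wα ∉ Δ⁺}| = det w`. To see this, write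
`w eᵢ = εᵢ e_{σ(i)}` and, for `i < j`, consider the images `εᵢ e_{σ(i)} ± εⱼ e_{σ(j)}` of the
two roots `eᵢ ± eⱼ`. If `σ(i) < σ(j)`, both have the sign `εᵢ`; otherwise their signs are `±εⱼ`,
and exactly one of them is negative. The long roots thus contribute `sign σ`, the short
roots contribute `∏ εᵢ`, and `sign σ * ∏ εᵢ` is the determinant of the monomial matrix of `w`.

An involution `θ` acts as `-1` on `ker (θ + id)` and, since it sends `x` to `x + (θ x - x)` with
`θ x - x ∈ ker (θ + id)`, trivially on the quotient. Hence `det θ = (-1) ^ dim ker (θ + id)`.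
-/

theorem det_eq_sign_mul_prod_of_basis_apply {R M ι : Type*} [CommRing R] [AddCommGroup M]
    [Module R M] [Fintype ι] [DecidableEq ι] (b : Module.Basis ι R M) {f : M →ₗ[R] M}
    {σ : Equiv.Perm ι} {c : ι → R} (h : ∀ i, f (b i) = c i • b (σ i)) :
    LinearMap.det f = (Equiv.Perm.sign σ : ℤ) * ∏ i, c i := by
  have hf : ⇑f ∘ ⇑b = fun i => c i • (⇑b ∘ ⇑σ) i := funext h
  calc LinearMap.det f = b.det (⇑f ∘ ⇑b) := by rw [b.det_comp, b.det_self, mul_one]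
    _ = (∏ i, c i) • Equiv.Perm.sign σ • b.det b := by
      rw [hf, AlternatingMap.map_smul_univ, AlternatingMap.map_perm]
    _ = (Equiv.Perm.sign σ : ℤ) * ∏ i, c i := by
      rw [b.det_self, smul_eq_mul, Units.smul_def, zsmul_eq_mul, mul_one, mul_comm]

theorem det_eq_neg_one_pow_finrank_of_involutive {K V : Type*} [Field K] [AddCommGroup V]
    [Module K V] [FiniteDimensional K V] {f : V →ₗ[K] V} (hf : Function.Involutive f) :
    LinearMap.det f = (-1) ^ Module.finrank K (LinearMap.ker (f + LinearMap.id)) := by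
  set N := LinearMap.ker (f + LinearMap.id) with hN
  have mem_N (x : V) : x ∈ N ↔ f x = -x := by
    simp [hN, eq_neg_iff_add_eq_zero]
  have hfN : ∀ x ∈ N, f x ∈ N := fun x hx => by
    rw [(mem_N x).1 hx]
    exact N.neg_mem hx
  have restrict_eq : f.restrict hfN = (-1 : K) • LinearMap.id := by
    ext x
    simpa using (mem_N x).1 x.2
  have mapQ_eq : N.mapQ N f hfN = LinearMap.id := by
    ext x
    refine (Submodule.Quotient.eq N).2 ((mem_N _).2 ?_)
    rw [map_sub, hf, neg_sub]
  rw [LinearMap.det_eq_det_mul_det N f hfN, restrict_eq, mapQ_eq, LinearMap.det_smul,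
    LinearMap.det_id, LinearMap.det_id, mul_one, mul_one]

section RootSystemB

variable {n : ℕ}

theorem eB_apply (i k : Fin n) : eB n i k = if k = i then 1 else 0 := by
  simp [eB]

theorem eB_ne_zero (i : Fin n) : eB n i ≠ 0 := by
  simp [eB]

theorem norm_eB (i : Fin n) : ‖eB n i‖ = 1 := by
  simp [eB]

theorem inner_eB_eB (i j : Fin n) : ⟪eB n i, eB n j⟫ = if i = j then (1 : ℝ) else 0 := by
  rw [eB, EuclideanSpace.inner_single_left, eB_apply, map_one, one_mul]

theorem inner_self_eB_add_smul_eB {i j : Fin n} (hij : i ≠ j) (u : ℤˣ) :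
    ⟪eB n i + u • eB n j, eB n i + u • eB n j⟫ = (2 : ℝ) := by
  rcases Int.units_eq_one_or u with rfl | rfl <;>
    norm_num [inner_add_left, inner_add_right, inner_eB_eB, hij, hij.symm,
      -inner_self_eq_norm_sq_to_K]

/-- The linear automorphism `w` is the signed permutation `eᵢ ↦ εᵢ e_{σ(i)}`. -/
def IsSignedPerm (w : EucB n ≃ₗ[ℝ] EucB n) (σ : Equiv.Perm (Fin n)) (ε : Fin n → ℤˣ) : Prop :=
  ∀ i, w (eB n i) = ε i • eB n (σ i)

namespace IsSignedPerm

variable {w w' : EucB n ≃ₗ[ℝ] EucB n} {σ σ' : Equiv.Perm (Fin n)} {ε ε' : Fin n → ℤˣ}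

theorem one : IsSignedPerm (1 : EucB n ≃ₗ[ℝ] EucB n) 1 1 := fun i => by simp

theorem apply_smul (h : IsSignedPerm w σ ε) (u : ℤˣ) (i : Fin n) :
    w (u • eB n i) = (u * ε i) • eB n (σ i) := by
  rw [← LinearEquiv.coe_coe, LinearMap.map_smul_of_tower, LinearEquiv.coe_coe, h, smul_smul]

theorem mul (h : IsSignedPerm w σ ε) (h' : IsSignedPerm w' σ' ε') :
    IsSignedPerm (w * w') (σ * σ') (fun i => ε' i * ε (σ' i)) := fun i => by
  rw [LinearEquiv.mul_apply, h', h.apply_smul, Equiv.Perm.mul_apply]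

theorem inv (h : IsSignedPerm w σ ε) :
    IsSignedPerm w⁻¹ σ⁻¹ (fun i => ε (σ⁻¹ i)) := fun i => by
  refine (LinearEquiv.symm_apply_eq w).2 ?_
  rw [h.apply_smul, Int.units_mul_self, one_smul, ← Equiv.Perm.mul_apply, mul_inv_cancel,
    Equiv.Perm.one_apply]

theorem det (h : IsSignedPerm w σ ε) :
    LinearMap.det w.toLinearMap = ((Equiv.Perm.sign σ * ∏ i, ε i : ℤˣ) : ℤ) := by
  have hb (i : Fin n) : w ((EuclideanSpace.basisFun (Fin n) ℝ).toBasis i) =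
      ((ε i : ℤ) : ℝ) • (EuclideanSpace.basisFun (Fin n) ℝ).toBasis (σ i) := by
    simpa [eB, Units.smul_def, ← Int.cast_smul_eq_zsmul ℝ] using h i
  rw [det_eq_sign_mul_prod_of_basis_apply _ hb]
  simp

end IsSignedPerm

theorem sReflB_apply (α x : EucB n) :
    sReflB n α x = x - (2 / ⟪α, α⟫ * ⟪x, α⟫) • α := by
  unfold sReflB
  split_ifs with h
  · simp [Module.reflection_apply, corootForm, corootB, inner_smul_right]
  · have hα : α = 0 := by
      contrapose! h
      simp [corootForm, corootB, inner_smul_right, h]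
    simp [hα]

theorem sReflB_neg (α : EucB n) : sReflB n (-α) = sReflB n α := by
  ext1 x
  simp [sReflB_apply]

theorem isSignedPerm_sReflB_eB (i : Fin n) :
    IsSignedPerm (sReflB n (eB n i)) 1 (Function.update 1 i (-1)) := fun k => by
  rcases eq_or_ne k i with rfl | hk
  · rw [sReflB_apply, inner_eB_eB, if_pos rfl, Function.update_self, Equiv.Perm.one_apply,
      Units.neg_smul, one_smul]
    module
  · simp [sReflB_apply, inner_eB_eB, hk]

theorem isSignedPerm_sReflB_eB_add_smul_eB {i j : Fin n} (hij : i ≠ j) (u : ℤˣ) :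
    IsSignedPerm (sReflB n (eB n i + u • eB n j)) (Equiv.swap i j)
      (fun k => if k = i ∨ k = j then -u else 1) := fun k => by
  rw [sReflB_apply, inner_self_eB_add_smul_eB hij]
  rcases Int.units_eq_one_or u with rfl | rfl <;>
    rcases eq_or_ne k i with rfl | hi <;> rcases eq_or_ne k j with rfl | hj <;>
    simp_all [inner_add_right, inner_eB_eB, norm_eB, Equiv.swap_apply_of_ne_of_ne, hij.symm]

/-- Labels of the positive roots of type `Bₙ`: the pair of `i < j` and a sign `u` stands for
`eᵢ + u eⱼ`, a single index `i` for `eᵢ`. -/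
abbrev PosRootLabel (n : ℕ) := ((Σ i : Fin n, Finset.Ioi i) × ℤˣ) ⊕ Fin n

/-- The positive root with a given label. -/
def posRoot : PosRootLabel n → EucB n
  | .inl (⟨i, j⟩, u) => eB n i + u • eB n j
  | .inr i => eB n i

theorem range_posRoot : Set.range (posRoot (n := n)) = DeltaBpos n := by
  ext v
  constructor
  · rintro ⟨⟨⟨i, j, hij⟩, u⟩ | i, rfl⟩
    · refine Or.inl ⟨i, j, Finset.mem_Ioi.1 hij, ?_⟩
      rcases Int.units_eq_one_or u with rfl | rfl <;> simp [posRoot, sub_eq_add_neg]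
    · exact Or.inr ⟨i, rfl⟩
  · rintro (⟨i, j, hij, rfl | rfl⟩ | ⟨i, rfl⟩)
    · exact ⟨.inl (⟨i, j, Finset.mem_Ioi.2 hij⟩, 1), by simp [posRoot]⟩
    · exact ⟨.inl (⟨i, j, Finset.mem_Ioi.2 hij⟩, -1), by simp [posRoot, sub_eq_add_neg]⟩
    · exact ⟨.inr i, rfl⟩

theorem eB_mem_DeltaBpos (i : Fin n) : eB n i ∈ DeltaBpos n := Or.inr ⟨i, rfl⟩

theorem eB_add_smul_eB_mem_DeltaBpos {i j : Fin n} (hij : i < j) (u : ℤˣ) :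
    eB n i + u • eB n j ∈ DeltaBpos n :=
  range_posRoot.subset ⟨.inl (⟨i, j, Finset.mem_Ioi.2 hij⟩, u), rfl⟩

/-- The position of the first nonzero coordinate of the positive root with a given label. -/
def PosRootLabel.lead : PosRootLabel n → Fin n
  | .inl (⟨i, _⟩, _) => i
  | .inr i => i

theorem posRoot_apply_lead (p : PosRootLabel n) : posRoot p p.lead = 1 := by
  rcases p with ⟨⟨i, j, hij⟩, u⟩ | i
  · simp [posRoot, PosRootLabel.lead, eB_apply, Units.smul_def, (Finset.mem_Ioi.1 hij).ne]
  · simp [posRoot, PosRootLabel.lead, eB_apply]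

theorem posRoot_apply_of_lt_lead {p : PosRootLabel n} {k : Fin n} (hk : k < p.lead) :
    posRoot p k = 0 := by
  rcases p with ⟨⟨i, j, hij⟩, u⟩ | i
  · have hkj : k < j := lt_trans hk (Finset.mem_Ioi.1 hij)
    simp [posRoot, eB_apply, Units.smul_def, hkj.ne, (show k < i from hk).ne]
  · simp [posRoot, eB_apply, (show k < i from hk).ne]

theorem lead_eq_of_posRoot_eq {p q : PosRootLabel n} (h : posRoot p = posRoot q) :
    p.lead = q.lead := by
  refine le_antisymm (le_of_not_gt fun hlt => ?_) (le_of_not_gt fun hlt => ?_)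
  · simpa [h, posRoot_apply_lead] using posRoot_apply_of_lt_lead hlt
  · simpa [← h, posRoot_apply_lead] using posRoot_apply_of_lt_lead hlt

theorem eq_and_eq_of_smul_eB_eq {i j : Fin n} {u v : ℤˣ} (h : u • eB n i = v • eB n j) :
    i = j ∧ u = v := by
  have hi : ((u : ℤ) : ℝ) = (v : ℤ) * if i = j then 1 else 0 := by
    simpa [Units.smul_def, eB_apply] using congrArg (fun x : EucB n => x i) h
  have hij : i = j := by
    by_contra hne
    simp [hne] at hi
  exact ⟨hij, Units.ext (by simpa [hij] using hi)⟩

theorem posRoot_injective : Function.Injective (posRoot (n := n)) := by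
  intro p q h
  have hlead := lead_eq_of_posRoot_eq h
  rcases p with ⟨⟨i, j, hj⟩, u⟩ | i <;> rcases q with ⟨⟨i', j', hj'⟩, u'⟩ | i' <;>
    obtain rfl : i = i' := hlead
  · obtain ⟨rfl, rfl⟩ := eq_and_eq_of_smul_eB_eq (add_left_cancel h)
    rfl
  · exact absurd (add_eq_left.1 h) ((smul_ne_zero_iff_ne _).2 (eB_ne_zero _))
  · exact absurd (left_eq_add.1 h) ((smul_ne_zero_iff_ne _).2 (eB_ne_zero _))
  · rfl

theorem neg_notMem_DeltaBpos {v : EucB n} (hv : v ∈ DeltaBpos n) : -v ∉ DeltaBpos n := by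
  rw [← range_posRoot] at hv ⊢
  rintro ⟨q, hq⟩
  obtain ⟨p, rfl⟩ := hv
  have hneg (k : Fin n) : posRoot q k = -posRoot p k := by rw [hq, PiLp.neg_apply]
  rcases lt_trichotomy p.lead q.lead with hlt | heq | hgt
  · have h := hneg p.lead
    rw [posRoot_apply_of_lt_lead hlt, posRoot_apply_lead] at h
    norm_num at h
  · have h := hneg p.lead
    rw [posRoot_apply_lead p, heq, posRoot_apply_lead] at h
    norm_num at h
  · have h := hneg q.lead
    rw [posRoot_apply_of_lt_lead hgt, posRoot_apply_lead] at h
    norm_num at h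

theorem mem_or_neg_mem_DeltaBpos {α : EucB n} (hα : α ∈ DeltaB n) :
    α ∈ DeltaBpos n ∨ -α ∈ DeltaBpos n := by
  rcases hα with ⟨i, j, hij, rfl | rfl | rfl | rfl⟩ | ⟨i, rfl | rfl⟩
  · exact .inl (.inl ⟨i, j, hij, .inl rfl⟩)
  · exact .inl (.inl ⟨i, j, hij, .inr rfl⟩)
  · exact .inr (.inl ⟨i, j, hij, .inr (by abel)⟩)
  · exact .inr (.inl ⟨i, j, hij, .inl (by abel)⟩)
  · exact .inl (eB_mem_DeltaBpos i)
  · exact .inr (by simpa using eB_mem_DeltaBpos i)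

theorem exists_isSignedPerm_sReflB_of_pos {α : EucB n} (hα : α ∈ DeltaBpos n) :
    ∃ σ ε, IsSignedPerm (sReflB n α) σ ε := by
  rw [← range_posRoot] at hα
  obtain ⟨⟨⟨i, j, hij⟩, u⟩ | i, rfl⟩ := hα
  · exact ⟨_, _, isSignedPerm_sReflB_eB_add_smul_eB (Finset.mem_Ioi.1 hij).ne u⟩
  · exact ⟨_, _, isSignedPerm_sReflB_eB i⟩

theorem exists_isSignedPerm_sReflB {α : EucB n} (hα : α ∈ DeltaB n) :
    ∃ σ ε, IsSignedPerm (sReflB n α) σ ε := by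
  rcases mem_or_neg_mem_DeltaBpos hα with hpos | hneg
  · exact exists_isSignedPerm_sReflB_of_pos hpos
  · exact sReflB_neg α ▸ exists_isSignedPerm_sReflB_of_pos hneg

theorem exists_isSignedPerm_of_mem_WeylB {w : EucB n ≃ₗ[ℝ] EucB n} (hw : w ∈ WeylB n) :
    ∃ σ ε, IsSignedPerm w σ ε := by
  induction hw using Subgroup.closure_induction with
  | mem _ hg =>
    obtain ⟨α, hα, rfl⟩ := hg
    exact exists_isSignedPerm_sReflB hα
  | one => exact ⟨_, _, .one⟩
  | mul _ _ _ _ hu hv =>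
    obtain ⟨_, _, hu⟩ := hu
    obtain ⟨_, _, hv⟩ := hv
    exact ⟨_, _, hu.mul hv⟩
  | inv _ _ hu =>
    obtain ⟨_, _, hu⟩ := hu
    exact ⟨_, _, hu.inv⟩

open Classical in
/-- The sign of a root of type `Bₙ`: `1` on `Δ⁺` and `-1` off it, so that it is meaningful only
for elements of `Δ`. -/
def rootSign (v : EucB n) : ℤˣ := if v ∈ DeltaBpos n then 1 else -1

theorem rootSign_smul {v : EucB n} (hv : v ∈ DeltaBpos n) (u : ℤˣ) : rootSign (u • v) = u := by
  rcases Int.units_eq_one_or u with rfl | rfl <;>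
    simp [rootSign, hv, neg_notMem_DeltaBpos hv]

theorem rootSign_smul_eB_add_smul_eB {i j : Fin n} (hij : i < j) (u v : ℤˣ) :
    rootSign (u • eB n i + v • eB n j) = u := by
  have hfactor : u • eB n i + v • eB n j = u • (eB n i + (u * v) • eB n j) := by
    rw [smul_add, smul_smul, ← mul_assoc, Int.units_mul_self, one_mul]
  rw [hfactor, rootSign_smul (eB_add_smul_eB_mem_DeltaBpos hij _)]

theorem prod_rootSign_smul_eB_add_smul_eB {i j : Fin n} (hij : i ≠ j) (u v : ℤˣ) :
    ∏ c : ℤˣ, rootSign (u • eB n i + (c * v) • eB n j) = if i < j then 1 else -1 := by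
  rcases hij.lt_or_gt with h | h
  · simp [rootSign_smul_eB_add_smul_eB h, h]
  · simp_rw [add_comm (u • eB n i), rootSign_smul_eB_add_smul_eB h]
    simp [h.not_gt, Finset.prod_mul_distrib]

theorem neg_one_pow_card_inversions (w : EucB n → EucB n) :
    (-1 : ℤˣ) ^ Nat.card {α : EucB n // α ∈ DeltaBpos n ∧ w α ∉ DeltaBpos n} =
      ∏ p : PosRootLabel n, rootSign (w (posRoot p)) := by
  classical
  have himage : {α | α ∈ DeltaBpos n ∧ w α ∉ DeltaBpos n} =
      posRoot '' {p | w (posRoot p) ∉ DeltaBpos n} := by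
    rw [← range_posRoot]
    exact Set.image_preimage_eq_range_inter.symm
  have hcard : Nat.card {α : EucB n // α ∈ DeltaBpos n ∧ w α ∉ DeltaBpos n} =
      Nat.card {p : PosRootLabel n // w (posRoot p) ∉ DeltaBpos n} :=
    (congrArg (fun s : Set (EucB n) => Nat.card s) himage).trans
      (Nat.card_image_of_injective posRoot_injective _)
  rw [hcard, Nat.card_eq_fintype_card, Fintype.card_subtype]
  simp [rootSign, Finset.prod_ite]

theorem IsSignedPerm.prod_rootSign {w : EucB n ≃ₗ[ℝ] EucB n} {σ : Equiv.Perm (Fin n)}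
    {ε : Fin n → ℤˣ} (h : IsSignedPerm w σ ε) :
    ∏ p : PosRootLabel n, rootSign (w (posRoot p)) = Equiv.Perm.sign σ * ∏ i, ε i := by
  have hshort (i : Fin n) : rootSign (w (eB n i)) = ε i := by
    rw [h, rootSign_smul (eB_mem_DeltaBpos _)]
  have hlong (i : Fin n) (j : Finset.Ioi i) :
      ∏ u : ℤˣ, rootSign (w (eB n i + u • eB n j)) = if σ i < σ j then 1 else -1 := by
    simp_rw [map_add, h.apply_smul, h i]
    exact prod_rootSign_smul_eB_add_smul_eB (σ.injective.ne (Finset.mem_Ioi.1 j.2).ne) _ _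
  rw [Fintype.prod_sum_type, Fintype.prod_prod_type, Fintype.prod_sigma]
  simp only [posRoot, hshort, hlong]
  rw [Equiv.Perm.sign_eq_prod_prod_Ioi]
  congr 1
  exact Finset.prod_congr rfl fun i _ =>
    Finset.prod_coe_sort _ (fun j => if σ i < σ j then 1 else -1)

theorem neg_one_pow_card_inversions_eq_det {w : EucB n ≃ₗ[ℝ] EucB n} (hw : w ∈ WeylB n) :
    (-1 : ℝ) ^ Nat.card {α : EucB n // α ∈ DeltaBpos n ∧ w α ∉ DeltaBpos n} =
      LinearMap.det w.toLinearMap := by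
  obtain ⟨σ, ε, h⟩ := exists_isSignedPerm_of_mem_WeylB hw
  rw [h.det, ← h.prod_rootSign, ← neg_one_pow_card_inversions]
  simp

end RootSystemB

/-- For every involution `θ ∈ W(Bₙ)`, the quantity
`|{α ∈ Δ⁺ : θα ∉ Δ⁺}| + dim ker(θ + id)` is even; consequently the length
`ℓ(θ) = (1/2)|{α ∈ Δ⁺ : θα ∉ Δ⁺}| + (1/2) dim ker(θ + id)` is a nonnegative integer. -/
theorem length_is_integer (n : ℕ) (hn : 0 < n)
    (θ : EucB n ≃ₗ[ℝ] EucB n) (hθW : θ ∈ WeylB n) (hθ2 : θ * θ = 1) :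
    Even (Nat.card {α : EucB n // α ∈ DeltaBpos n ∧ θ α ∉ DeltaBpos n} +
        Module.finrank ℝ ↥(LinearMap.ker (θ.toLinearMap + LinearMap.id))) ∧
    ∃ l : ℕ,
      (Nat.card {α : EucB n // α ∈ DeltaBpos n ∧ θ α ∉ DeltaBpos n} : ℚ) / 2 +
        (Module.finrank ℝ ↥(LinearMap.ker (θ.toLinearMap + LinearMap.id)) : ℚ) / 2 = l := by
  have parity : Even (Nat.card {α : EucB n // α ∈ DeltaBpos n ∧ θ α ∉ DeltaBpos n} +
      Module.finrank ℝ ↥(LinearMap.ker (θ.toLinearMap + LinearMap.id))) := by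
    have hinv : Function.Involutive θ.toLinearMap := LinearEquiv.congr_fun hθ2
    rw [← neg_one_pow_eq_one_iff_even (R := ℝ) (by norm_num), pow_add,
      neg_one_pow_card_inversions_eq_det hθW, det_eq_neg_one_pow_finrank_of_involutive hinv,
      ← mul_pow, neg_mul_neg, one_mul, one_pow]
  refine ⟨parity, ?_⟩
  obtain ⟨l, hl⟩ := parity
  exact ⟨l, by rw [← add_div, ← Nat.cast_add, hl, Nat.cast_add, add_self_div_two]⟩
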